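/- arXiv:2511.13567 — 4 statements merged into one kernel-verified Lean document; each statement's English description precedes it below -/
import Mathlib

section
/- Let s ∈ (1/2, 1], let F : ℝ → ℝ be a smooth (C^∞) function, and let M > 0. Then there exists a constant C > 0 (depending on F, s and M) such that for every v ∈ H^s(𝕋) with ‖v‖_{L^∞} ≤ M, the composition F∘v − F(0) belongs to H^s(𝕋) and ‖F∘v − F(0)‖_{H^s} ≤ C ‖v‖_{H^s}. -/
/-!
The norm of `H^s` is controlled by differences `v(· + h) - v`. On `[-M, M]` the function `F` is
Lipschitz with some constant `L`, so `g = F ∘ v - F 0` satisfies `|g| ≤ L |v|` and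
`|g(x + h) - g(x)| ≤ L |v(x + h) - v(x)|` pointwise. By Parseval (`parseval_le`) and
`fourierCoeff_diff_sq` this becomes, for every step `h`,
`∑ |e^{2πinh} - 1|² |ĝ(n)|² ≤ L² ∑ |e^{2πinh} - 1|² |v̂(n)|²`.

For `0 < s < 1` the multiplier `|n|^{2s}` is, up to a finite nonzero constant, the integral of
`|e^{2πinh} - 1|²` against `h^{-1-2s} dh` on `(0, ∞)` (`lintegral_diffWeight`), so integrating the
inequality in `h` gives the bound for the homogeneous seminorm. For `s = 1` that integral diverges;
there, any finite set of frequencies is handled by one sufficiently small step `h`, for which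
`|e^{2πinh} - 1|²` is comparable to `n² h²` (`seminorm_one_le`). Adding the `L²` bound and using
`(1 + n²)^s ≤ 1 + |n|^{2s}` finishes the proof.
-/

open MeasureTheory
open scoped ENNReal

noncomputable section

instance : Fact ((0 : ℝ) < 1) := ⟨zero_lt_one⟩

/-- The `H^s` norm (with values in `[0,∞]`) of a real-valued function on the
torus `𝕋 = ℝ/ℤ`, defined through its Fourier coefficients:
`‖v‖_{H^s}² = Σ_{n∈ℤ} (1+n²)^s |v̂(n)|²`. -/
def hsNorm (s : ℝ) (v : AddCircle (1 : ℝ) → ℝ) : ℝ≥0∞ :=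
  (∑' n : ℤ, ENNReal.ofReal ((1 + (n : ℝ) ^ 2) ^ s) *
      (‖fourierCoeff (fun x => (v x : ℂ)) n‖₊ : ℝ≥0∞) ^ 2) ^ (1 / 2 : ℝ)

/-! ### Fourier coefficients of differences -/

/-- The squared modulus `|e^{2πix} - 1|²`, as a nonnegative extended real. For `x = n h` it is the
factor by which the difference `v(· + h) - v` changes the squared `n`-th Fourier coefficient. -/
def diffWeight (x : ℝ) : ℝ≥0∞ := ENNReal.ofReal (4 * Real.sin (Real.pi * x) ^ 2)

lemma measurable_diffWeight : Measurable diffWeight := by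
  unfold diffWeight; fun_prop

lemma diffWeight_abs (x : ℝ) : diffWeight |x| = diffWeight x := by
  rcases abs_choice x with h | h <;> simp [h, diffWeight]

lemma norm_fourier_sub_one_sq (n : ℤ) (h : ℝ) :
    ‖fourier n (h : AddCircle (1 : ℝ)) - 1‖ ^ 2 = 4 * Real.sin (Real.pi * (n * h)) ^ 2 := by
  rw [fourier_coe_apply]
  have := Complex.norm_exp_I_mul_ofReal_sub_one (2 * (Real.pi * (n * h)))
  rw [show 2 * (Real.pi : ℂ) * Complex.I * n * h / (1 : ℝ)
    = Complex.I * ((2 * (Real.pi * (n * h)) : ℝ) : ℂ) by push_cast; ring, this,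
    mul_div_cancel_left₀ _ two_ne_zero, Real.norm_eq_abs, sq_abs]
  ring

lemma fourierCoeff_comp_add (f : AddCircle (1 : ℝ) → ℂ) (n : ℤ) (h : AddCircle (1 : ℝ)) :
    fourierCoeff (fun x => f (x + h)) n = fourier n h * fourierCoeff f n := by
  unfold fourierCoeff
  rw [← integral_const_mul,
    ← integral_add_right_eq_self (μ := AddCircle.haarAddCircle)
      (fun t => fourier n h * (fourier (-n) t • f t)) h]
  congr 1
  ext t
  have : fourier n h * fourier (-n) (t + h) = fourier (-n) t := by
    simp only [fourier_apply, smul_add, AddCircle.toCircle_add, Circle.coe_mul]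
    rw [mul_left_comm, ← Circle.coe_mul, ← AddCircle.toCircle_add, ← add_smul]
    simp
  rw [smul_eq_mul, smul_eq_mul, ← mul_assoc, this]

lemma fourierCoeff_sub' {f g : AddCircle (1 : ℝ) → ℂ} (hf : Continuous f) (hg : Continuous g)
    (n : ℤ) : fourierCoeff (fun x => f x - g x) n = fourierCoeff f n - fourierCoeff g n := by
  have hi : ∀ {u : AddCircle (1 : ℝ) → ℂ}, Continuous u →
      Integrable (fun t => fourier (-n) t • u t) AddCircle.haarAddCircle := fun {u} hu =>
    Continuous.integrable_of_hasCompactSupport (by fun_prop) (HasCompactSupport.of_compactSpace _)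
  unfold fourierCoeff
  rw [← integral_sub (hi hf) (hi hg)]
  simp only [smul_sub]

/-- Differences act on Fourier coefficients as multipliers. -/
lemma fourierCoeff_diff_sq {f : AddCircle (1 : ℝ) → ℂ} (hf : Continuous f) (n : ℤ) (h : ℝ) :
    (‖fourierCoeff (fun x => f (x + (h : AddCircle (1 : ℝ))) - f x) n‖₊ : ℝ≥0∞) ^ 2
      = diffWeight (n * h) * (‖fourierCoeff f n‖₊ : ℝ≥0∞) ^ 2 := by
  rw [fourierCoeff_sub' (by fun_prop) hf, fourierCoeff_comp_add, ← sub_one_mul, nnnorm_mul,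
    ENNReal.coe_mul, mul_pow, diffWeight, ← norm_fourier_sub_one_sq,
    ENNReal.ofReal_pow (norm_nonneg _), ofReal_norm, enorm_eq_nnnorm]

/-- Parseval's identity turns a pointwise bound into a bound on Fourier coefficients. -/
lemma parseval_le {f g : AddCircle (1 : ℝ) → ℂ} (hf : Continuous f) (hg : Continuous g)
    (K : ℝ) (hK : 0 ≤ K) (hfg : ∀ x, ‖g x‖ ^ 2 ≤ K * ‖f x‖ ^ 2) :
    ∑' n, (‖fourierCoeff g n‖₊ : ℝ≥0∞) ^ 2
      ≤ ENNReal.ofReal K * ∑' n, (‖fourierCoeff f n‖₊ : ℝ≥0∞) ^ 2 := by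
  have key : ∀ {u : AddCircle (1 : ℝ) → ℂ}, Continuous u →
      ∑' n, (‖fourierCoeff u n‖₊ : ℝ≥0∞) ^ 2
        = ENNReal.ofReal (∫ t, ‖u t‖ ^ 2 ∂AddCircle.haarAddCircle) := by
    intro u hu
    let U : C(AddCircle (1 : ℝ), ℂ) := ⟨u, hu⟩
    have h1 := hasSum_sq_fourierCoeff (ContinuousMap.toLp 2 AddCircle.haarAddCircle ℂ U)
    simp only [fourierCoeff_toLp] at h1
    have h2 : ∫ t, ‖(ContinuousMap.toLp 2 AddCircle.haarAddCircle ℂ U) t‖ ^ 2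
        ∂AddCircle.haarAddCircle = ∫ t, ‖u t‖ ^ 2 ∂AddCircle.haarAddCircle := by
      apply integral_congr_ae
      filter_upwards [ContinuousMap.coeFn_toLp (p := 2) AddCircle.haarAddCircle (𝕜 := ℂ) U]
        with t ht
      rw [ht]; rfl
    rw [h2] at h1
    rw [← h1.tsum_eq, ENNReal.ofReal_tsum_of_nonneg (fun _ => by positivity) h1.summable]
    congr 1
    ext n
    rw [ENNReal.ofReal_pow (norm_nonneg _), ofReal_norm, enorm_eq_nnnorm]
    rfl
  have hi : ∀ {u : AddCircle (1 : ℝ) → ℂ}, Continuous u →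
      Integrable (fun t => ‖u t‖ ^ 2) AddCircle.haarAddCircle := fun {u} hu =>
    Continuous.integrable_of_hasCompactSupport (by fun_prop) (HasCompactSupport.of_compactSpace _)
  rw [key hf, key hg, ← ENNReal.ofReal_mul hK, ← integral_const_mul]
  exact ENNReal.ofReal_le_ofReal (integral_mono (hi hg) ((hi hf).const_mul K) hfg)

/-! ### The integral representation of `|n|^{2s}` -/

/-- The homogeneity constant `∫_0^∞ |e^{2πix} - 1|² x^{-1-2s} dx`. -/
def gagliardoConst (s : ℝ) : ℝ≥0∞ :=
  ∫⁻ x in Set.Ioi (0 : ℝ), diffWeight x * ENNReal.ofReal (x ^ (-1 - 2 * s))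

lemma gagliardoConst_ne_zero (s : ℝ) : gagliardoConst s ≠ 0 := by
  intro h0
  have hW := measurable_diffWeight
  rw [gagliardoConst, lintegral_eq_zero_iff (by fun_prop)] at h0
  have h1 : ∀ᵐ x ∂(volume.restrict (Set.Ioo (0 : ℝ) 1)), False := by
    have h2 := ae_restrict_of_ae_restrict_of_subset
      (Set.Ioo_subset_Ioi_self : Set.Ioo (0 : ℝ) 1 ⊆ Set.Ioi 0) h0
    filter_upwards [h2, ae_restrict_mem measurableSet_Ioo] with x hx hx1
    have h3 : 0 < Real.sin (Real.pi * x) :=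
      Real.sin_pos_of_pos_of_lt_pi (mul_pos Real.pi_pos hx1.1)
        (by nlinarith [Real.pi_pos, hx1.2])
    have h4 : 0 < x ^ (-1 - 2 * s) := Real.rpow_pos_of_pos hx1.1 _
    simp only [Pi.zero_apply, diffWeight, mul_eq_zero, ENNReal.ofReal_eq_zero] at hx
    rcases hx with hx | hx
    · nlinarith [pow_pos h3 2]
    · linarith
  rw [Filter.eventually_false_iff_eq_bot, ae_eq_bot, Measure.restrict_eq_zero,
    Real.volume_Ioo] at h1
  norm_num at h1

/-- Near `0` the integrand is `O(x^{1-2s})`, which needs `s < 1`; near `∞` it is `O(x^{-1-2s})`,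
which needs `s > 0`. -/
lemma gagliardoConst_ne_top {s : ℝ} (hs0 : 0 < s) (hs1 : s < 1) : gagliardoConst s ≠ ⊤ := by
  have hint : ∀ (c : ℝ) (p : ℝ) (S : Set ℝ), IntegrableOn (fun x : ℝ => x ^ p) S →
      ∫⁻ x in S, ENNReal.ofReal (c * x ^ p) < ⊤ := fun c p S h =>
    (h.const_mul c).lintegral_lt_top
  have hlow : ∫⁻ x in Set.Ioc (0 : ℝ) 1, diffWeight x * ENNReal.ofReal (x ^ (-1 - 2 * s))
      < ⊤ := by
    refine lt_of_le_of_lt (setLIntegral_mono' measurableSet_Ioc fun x hx => ?_)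
      (hint (4 * Real.pi ^ 2) (1 - 2 * s) (Set.Ioc 0 1) ?_)
    · rw [diffWeight, ← ENNReal.ofReal_mul (by positivity)]
      apply ENNReal.ofReal_le_ofReal
      have h1 : Real.sin (Real.pi * x) ^ 2 ≤ (Real.pi * x) ^ 2 :=
        sq_le_sq.2 Real.abs_sin_le_abs
      have h2 : x ^ (1 - 2 * s) = x ^ 2 * x ^ (-1 - 2 * s) := by
        rw [← Real.rpow_natCast, ← Real.rpow_add hx.1]; congr 1; push_cast; ring
      rw [h2, ← mul_assoc]
      have := Real.rpow_nonneg hx.1.le (-1 - 2 * s)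
      exact mul_le_mul_of_nonneg_right (by linarith) this
    · exact (intervalIntegrable_iff_integrableOn_Ioc_of_le zero_le_one).1
        (intervalIntegral.intervalIntegrable_rpow' (by linarith))
  have hhigh : ∫⁻ x in Set.Ioi (1 : ℝ), diffWeight x * ENNReal.ofReal (x ^ (-1 - 2 * s))
      < ⊤ := by
    refine lt_of_le_of_lt (setLIntegral_mono' measurableSet_Ioi fun x hx => ?_)
      (hint 4 (-1 - 2 * s) (Set.Ioi 1) (integrableOn_Ioi_rpow_of_lt (by linarith) one_pos))
    rw [diffWeight, ← ENNReal.ofReal_mul (by positivity)]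
    apply ENNReal.ofReal_le_ofReal
    have := Real.rpow_nonneg (zero_le_one.trans (le_of_lt hx)) (-1 - 2 * s)
    have := Real.sin_sq_le_one (Real.pi * x)
    gcongr
    linarith
  rw [gagliardoConst, ← Set.Ioc_union_Ioi_eq_Ioi (zero_le_one (α := ℝ))]
  exact ((lintegral_union_le _ _ _).trans_lt (ENNReal.add_lt_top.2 ⟨hlow, hhigh⟩)).ne

/-- Scaling: integrating the weights against `h^{-1-2s} dh` produces the multiplier `|n|^{2s}`. -/
lemma lintegral_diffWeight {s : ℝ} (hs : 0 < s) (n : ℤ) :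
    ∫⁻ h in Set.Ioi (0 : ℝ), diffWeight (n * h) * ENNReal.ofReal (h ^ (-1 - 2 * s))
      = ENNReal.ofReal (((n : ℝ) ^ 2) ^ s) * gagliardoConst s := by
  rcases eq_or_ne n 0 with rfl | hn
  · simp [diffWeight, Real.zero_rpow hs.ne']
  set a : ℝ := |(n : ℝ)| with ha
  have ha0 : 0 < a := by positivity
  have hmap := setLIntegral_map (μ := volume) (measurableSet_Ioi (a := (0 : ℝ)))
    (measurable_diffWeight.mul (by fun_prop :
      Measurable fun x : ℝ => ENNReal.ofReal (x ^ (-1 - 2 * s)))) (measurable_const_mul a)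
  have hpre : (fun x => a * x) ⁻¹' Set.Ioi (0 : ℝ) = Set.Ioi 0 := by
    ext x; simp [ha0]
  rw [hpre, Real.map_volume_mul_left ha0.ne', Measure.restrict_smul, lintegral_smul_measure,
    abs_of_pos (inv_pos.2 ha0)] at hmap
  change ENNReal.ofReal a⁻¹ * gagliardoConst s = _ at hmap
  have hpow : (((n : ℝ) ^ 2) ^ s) = a ^ (1 + 2 * s) * a⁻¹ := by
    rw [← sq_abs, ← ha, ← Real.rpow_natCast, ← Real.rpow_mul ha0.le, ← Real.rpow_neg_one a,
      ← Real.rpow_add ha0]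
    congr 1; push_cast; ring
  rw [hpow, ENNReal.ofReal_mul (by positivity), mul_assoc, hmap,
    ← lintegral_const_mul _ (by have := measurable_diffWeight; fun_prop)]
  refine setLIntegral_congr_fun measurableSet_Ioi fun h hh => ?_
  have hh : 0 < h := hh
  simp only [Pi.mul_apply]
  rw [← diffWeight_abs (n * h), abs_mul, abs_of_pos hh, ← ha, mul_left_comm,
    ← ENNReal.ofReal_mul (by positivity), Real.mul_rpow ha0.le hh.le, ← mul_assoc (a ^ _),
    ← Real.rpow_add ha0]
  simp

/-! ### Comparison of Sobolev norms -/

/-- For `s < 1`, integrating the comparison of differences against `h^{-1-2s} dh` yields the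
comparison of homogeneous Sobolev seminorms. -/
lemma seminorm_le_of_lt_one {s : ℝ} (hs0 : 0 < s) (hs1 : s < 1) {K : ℝ≥0∞} {a b : ℤ → ℝ≥0∞}
    (hab : ∀ h : ℝ, ∑' n : ℤ, diffWeight (n * h) * b n
      ≤ K * ∑' n : ℤ, diffWeight (n * h) * a n) :
    ∑' n : ℤ, ENNReal.ofReal (((n : ℝ) ^ 2) ^ s) * b n
      ≤ K * ∑' n : ℤ, ENNReal.ofReal (((n : ℝ) ^ 2) ^ s) * a n := by
  have hW := measurable_diffWeight
  have key : ∀ c : ℤ → ℝ≥0∞,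
      gagliardoConst s * ∑' n : ℤ, ENNReal.ofReal (((n : ℝ) ^ 2) ^ s) * c n
        = ∫⁻ h in Set.Ioi (0 : ℝ), (∑' n : ℤ, diffWeight (n * h) * c n)
            * ENNReal.ofReal (h ^ (-1 - 2 * s)) := by
    intro c
    simp_rw [← ENNReal.tsum_mul_right]
    rw [lintegral_tsum (fun n => by fun_prop), ← ENNReal.tsum_mul_left]
    congr 1
    ext n
    simp_rw [mul_right_comm _ (c n)]
    rw [lintegral_mul_const _ (by fun_prop), lintegral_diffWeight hs0]
    ring
  have hmeas : Measurable fun h : ℝ => (∑' n : ℤ, diffWeight (n * h) * a n)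
      * ENNReal.ofReal (h ^ (-1 - 2 * s)) :=
    (Measurable.tsum fun n => by fun_prop).mul (by fun_prop)
  rw [← ENNReal.mul_le_mul_iff_right (gagliardoConst_ne_zero s) (gagliardoConst_ne_top hs0 hs1),
    mul_left_comm, key, key, ← lintegral_const_mul _ hmeas]
  refine lintegral_mono fun h => ?_
  rw [← mul_assoc]
  exact mul_le_mul_left (hab h) _

/-- For `s = 1`, on frequencies `|n| ≤ N` the weight at the single step `h = 1/(2N)` is comparable
to `n² h²`, because `|sin y| ≥ 2|y|/π` for `|y| ≤ π/2`. The ratio of the two bounds is `π²/4`, estimated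
by `4`. -/
lemma seminorm_one_le {K : ℝ≥0∞} {a b : ℤ → ℝ≥0∞}
    (hab : ∀ h : ℝ, ∑' n : ℤ, diffWeight (n * h) * b n
      ≤ K * ∑' n : ℤ, diffWeight (n * h) * a n) :
    ∑' n : ℤ, ENNReal.ofReal ((n : ℝ) ^ 2) * b n
      ≤ 4 * K * ∑' n : ℤ, ENNReal.ofReal ((n : ℝ) ^ 2) * a n := by
  rw [ENNReal.tsum_eq_iSup_sum]
  refine iSup_le fun t => ?_
  obtain ⟨N, hN0, hN⟩ : ∃ N : ℝ, 0 < N ∧ ∀ n ∈ t, |(n : ℝ)| ≤ N := by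
    refine ⟨1 + ∑ n ∈ t, |(n : ℝ)|, by positivity, fun n hn => ?_⟩
    have := Finset.single_le_sum (f := fun n : ℤ => |(n : ℝ)|) (fun _ _ => abs_nonneg _) hn
    linarith
  set h : ℝ := 1 / (2 * N) with hh
  have hh0 : 0 < h := by positivity
  have hlow : ∀ n ∈ t, ENNReal.ofReal ((n : ℝ) ^ 2)
      ≤ ENNReal.ofReal (1 / (16 * h ^ 2)) * diffWeight (n * h) := by
    intro n hn
    rw [diffWeight, ← ENNReal.ofReal_mul (by positivity)]
    apply ENNReal.ofReal_le_ofReal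
    have h1 : 2 / Real.pi * |Real.pi * (n * h)| ≤ |Real.sin (Real.pi * (n * h))| := by
      apply Real.mul_abs_le_abs_sin
      rw [abs_mul, abs_mul, abs_of_pos Real.pi_pos, abs_of_pos hh0]
      have : |(n : ℝ)| * h ≤ N * h := by gcongr; exact hN n hn
      have hNh : N * h = 1 / 2 := by rw [hh]; field_simp
      nlinarith [Real.pi_pos]
    have h2 : 2 / Real.pi * |Real.pi * (n * h)| = |2 * (n * h)| := by
      rw [abs_mul, abs_of_pos Real.pi_pos, abs_mul 2, abs_two]
      field_simp
    rw [h2] at h1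
    have h3 := sq_le_sq.2 h1
    calc (n : ℝ) ^ 2 = 1 / (16 * h ^ 2) * (4 * (2 * (n * h)) ^ 2) := by field_simp; ring
      _ ≤ _ := by gcongr
  have hup : ∀ n : ℤ, diffWeight (n * h)
      ≤ ENNReal.ofReal (64 * h ^ 2) * ENNReal.ofReal ((n : ℝ) ^ 2) := by
    intro n
    rw [diffWeight, ← ENNReal.ofReal_mul (by positivity)]
    apply ENNReal.ofReal_le_ofReal
    have h1 : Real.sin (Real.pi * (n * h)) ^ 2 ≤ (Real.pi * (n * h)) ^ 2 :=
      sq_le_sq.2 Real.abs_sin_le_abs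
    have h2 : Real.pi ^ 2 ≤ 16 := by nlinarith [Real.pi_le_four, Real.pi_pos]
    calc 4 * Real.sin (Real.pi * (n * h)) ^ 2 ≤ 4 * (Real.pi * (n * h)) ^ 2 := by gcongr
      _ = 4 * Real.pi ^ 2 * (h ^ 2 * (n : ℝ) ^ 2) := by ring
      _ ≤ 4 * 16 * (h ^ 2 * (n : ℝ) ^ 2) := by gcongr
      _ = _ := by ring
  calc ∑ n ∈ t, ENNReal.ofReal ((n : ℝ) ^ 2) * b n
      ≤ ∑ n ∈ t, ENNReal.ofReal (1 / (16 * h ^ 2)) * (diffWeight (n * h) * b n) := by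
        refine Finset.sum_le_sum fun n hn => ?_
        rw [← mul_assoc]
        exact mul_le_mul_left (hlow n hn) _
    _ = ENNReal.ofReal (1 / (16 * h ^ 2)) * ∑ n ∈ t, diffWeight (n * h) * b n := by
        rw [Finset.mul_sum]
    _ ≤ ENNReal.ofReal (1 / (16 * h ^ 2)) * (K * ∑' n : ℤ, diffWeight (n * h) * a n) := by
        gcongr
        exact (ENNReal.sum_le_tsum t).trans (hab h)
    _ ≤ ENNReal.ofReal (1 / (16 * h ^ 2)) * (K * ∑' n : ℤ,
          ENNReal.ofReal (64 * h ^ 2) * (ENNReal.ofReal ((n : ℝ) ^ 2) * a n)) := by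
        refine mul_le_mul_right (mul_le_mul_right (ENNReal.tsum_le_tsum fun n => ?_) _) _
        rw [← mul_assoc]
        exact mul_le_mul_left (hup n) _
    _ = (ENNReal.ofReal (1 / (16 * h ^ 2)) * ENNReal.ofReal (64 * h ^ 2)) * K
          * ∑' n : ℤ, ENNReal.ofReal ((n : ℝ) ^ 2) * a n := by
        rw [ENNReal.tsum_mul_left]; ring
    _ = _ := by
        rw [← ENNReal.ofReal_mul (by positivity),
          show 1 / (16 * h ^ 2) * (64 * h ^ 2) = 4 by field_simp; norm_num]
        simp

lemma seminorm_le {s : ℝ} (hs0 : 0 < s) (hs1 : s ≤ 1) {K : ℝ≥0∞} {a b : ℤ → ℝ≥0∞}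
    (hab : ∀ h : ℝ, ∑' n : ℤ, diffWeight (n * h) * b n
      ≤ K * ∑' n : ℤ, diffWeight (n * h) * a n) :
    ∑' n : ℤ, ENNReal.ofReal (((n : ℝ) ^ 2) ^ s) * b n
      ≤ 4 * K * ∑' n : ℤ, ENNReal.ofReal (((n : ℝ) ^ 2) ^ s) * a n := by
  rcases hs1.lt_or_eq with h | rfl
  · refine (seminorm_le_of_lt_one hs0 h hab).trans ?_
    rw [mul_assoc]
    exact le_mul_of_one_le_left zero_le (by norm_num)
  · simpa only [Real.rpow_one] using seminorm_one_le hab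

/-- The inhomogeneous weight satisfies `(1+n²)^s ≤ 1 + |n|^{2s} ≤ 2 (1+n²)^s`, so the `L²` and
seminorm comparisons add up. -/
lemma weighted_sum_le {s : ℝ} (hs0 : 0 < s) (hs1 : s ≤ 1) {K : ℝ≥0∞} {a b : ℤ → ℝ≥0∞}
    (h0 : ∑' n, b n ≤ K * ∑' n, a n)
    (hab : ∀ h : ℝ, ∑' n : ℤ, diffWeight (n * h) * b n
      ≤ K * ∑' n : ℤ, diffWeight (n * h) * a n) :
    ∑' n : ℤ, ENNReal.ofReal ((1 + (n : ℝ) ^ 2) ^ s) * b n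
      ≤ 5 * K * ∑' n : ℤ, ENNReal.ofReal ((1 + (n : ℝ) ^ 2) ^ s) * a n := by
  set A := ∑' n : ℤ, ENNReal.ofReal ((1 + (n : ℝ) ^ 2) ^ s) * a n
  have hA0 : ∑' n, a n ≤ A := by
    refine ENNReal.tsum_le_tsum fun n => le_mul_of_one_le_left zero_le ?_
    rw [ENNReal.one_le_ofReal]
    exact Real.one_le_rpow (by nlinarith [sq_nonneg (n : ℝ)]) hs0.le
  have hA1 : ∑' n : ℤ, ENNReal.ofReal (((n : ℝ) ^ 2) ^ s) * a n ≤ A := by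
    refine ENNReal.tsum_le_tsum fun n => ?_
    gcongr
    linarith
  calc ∑' n : ℤ, ENNReal.ofReal ((1 + (n : ℝ) ^ 2) ^ s) * b n
      ≤ ∑' n : ℤ, (b n + ENNReal.ofReal (((n : ℝ) ^ 2) ^ s) * b n) := by
        refine ENNReal.tsum_le_tsum fun n => ?_
        rw [← one_add_mul]
        gcongr
        rw [← ENNReal.ofReal_one, ← ENNReal.ofReal_add zero_le_one (by positivity)]
        apply ENNReal.ofReal_le_ofReal
        simpa using Real.rpow_add_le_add_rpow zero_le_one (sq_nonneg (n : ℝ)) hs0.le hs1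
    _ = ∑' n, b n + ∑' n : ℤ, ENNReal.ofReal (((n : ℝ) ^ 2) ^ s) * b n := ENNReal.tsum_add
    _ ≤ K * A + 4 * K * A := by
        refine add_le_add (h0.trans (by gcongr)) ((seminorm_le hs0 hs1 hab).trans (by gcongr))
    _ = 5 * K * A := by ring

lemma exists_lipschitz_bound {F : ℝ → ℝ} (hF : ContDiff ℝ (⊤ : ℕ∞) F) (M : ℝ) :
    ∃ L : ℝ, 0 < L ∧ ∀ x y : ℝ, |x| ≤ M → |y| ≤ M → |F x - F y| ≤ L * |x - y| := by
  obtain ⟨B, hB⟩ := (isCompact_Icc (a := -M) (b := M)).exists_bound_of_continuousOn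
    (hF.continuous_deriv (by simp)).continuousOn
  refine ⟨|B| + 1, by positivity, fun x y hx hy => ?_⟩
  exact (convex_Icc (-M) M).norm_image_sub_le_of_norm_deriv_le (f := F)
    (fun z _ => (hF.differentiable (by simp)).differentiableAt)
    (fun z hz => (hB z hz).trans ((le_abs_self B).trans (by linarith)))
    (abs_le.1 hy) (abs_le.1 hx)

/-- for `s ∈ (1/2,1]`, `F` smooth and `M > 0` there is `C > 0` such that
for every `v ∈ H^s(𝕋)` (identified with its continuous representative) with
`‖v‖_{L^∞} ≤ M`, the composition `F∘v − F(0)` belongs to `H^s(𝕋)` and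
`‖F∘v − F(0)‖_{H^s} ≤ C ‖v‖_{H^s}`. -/
theorem smooth_composition_Hs (s : ℝ) (hs₁ : 1 / 2 < s) (hs₂ : s ≤ 1)
    (F : ℝ → ℝ) (hF : ContDiff ℝ (⊤ : ℕ∞) F) (M : ℝ) (hM : 0 < M) :
    ∃ C : ℝ, 0 < C ∧
      ∀ v : AddCircle (1 : ℝ) → ℝ, Continuous v → (∀ x, |v x| ≤ M) →
        hsNorm s v ≠ ⊤ →
        hsNorm s (fun x => F (v x) - F 0) ≠ ⊤ ∧
        hsNorm s (fun x => F (v x) - F 0) ≤ ENNReal.ofReal C * hsNorm s v := by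
  obtain ⟨L, hL0, hL⟩ := exists_lipschitz_bound hF M
  have hFc : Continuous F := hF.continuous
  have hs0 : 0 < s := by linarith
  refine ⟨(5 * L ^ 2) ^ (1 / 2 : ℝ), by positivity, fun v hv hvM hvs => ?_⟩
  have hle : hsNorm s (fun x => F (v x) - F 0)
      ≤ ENNReal.ofReal ((5 * L ^ 2) ^ (1 / 2 : ℝ)) * hsNorm s v := by
    have hsum := weighted_sum_le hs0 hs₂ (K := ENNReal.ofReal (L ^ 2))
      (a := fun n => (‖fourierCoeff (fun x => (v x : ℂ)) n‖₊ : ℝ≥0∞) ^ 2)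
      (b := fun n => (‖fourierCoeff (fun x => ((F (v x) - F 0 : ℝ) : ℂ)) n‖₊ : ℝ≥0∞) ^ 2)
      ?_ ?_
    · unfold hsNorm
      rw [← ENNReal.ofReal_rpow_of_nonneg (by positivity) (by norm_num),
        ← ENNReal.mul_rpow_of_nonneg _ _ (by norm_num)]
      refine ENNReal.rpow_le_rpow ?_ (by norm_num)
      rw [ENNReal.ofReal_mul (by norm_num), ENNReal.ofReal_ofNat]
      exact hsum
    · refine parseval_le (by fun_prop) (by fun_prop) _ (by positivity) fun x => ?_
      rw [Complex.norm_real, Complex.norm_real, Real.norm_eq_abs, Real.norm_eq_abs, ← mul_pow]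
      refine pow_le_pow_left₀ (abs_nonneg _) ?_ 2
      simpa using hL (v x) 0 (hvM x) (by simpa using hM.le)
    · intro h
      simp_rw [← fourierCoeff_diff_sq (f := fun x => (v x : ℂ)) (by fun_prop),
        ← fourierCoeff_diff_sq (f := fun x => ((F (v x) - F 0 : ℝ) : ℂ)) (by fun_prop)]
      refine parseval_le (by fun_prop) (by fun_prop) _ (by positivity) fun x => ?_
      rw [← Complex.ofReal_sub, ← Complex.ofReal_sub, Complex.norm_real, Complex.norm_real,
        Real.norm_eq_abs, Real.norm_eq_abs, ← mul_pow, sub_sub_sub_cancel_right]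
      exact pow_le_pow_left₀ (abs_nonneg _) (hL _ _ (hvM _) (hvM _)) 2
  exact ⟨ne_top_of_le_ne_top (ENNReal.mul_ne_top ENNReal.ofReal_ne_top hvs) hle, hle⟩
end
end

section
/- Let s ∈ (1/2, 1] and let F : ℝ → ℝ be a smooth (C^∞) function whose derivative F' is bounded on ℝ. Then there exists a constant C > 0 (depending on F and s) such that for every v ∈ H^s(𝕋) one has ‖F∘v − F(0)‖_{H^s} ≤ C ‖v‖_{H^s}. -/
/-!
A function `w = F ∘ v - F 0` with `|F'| ≤ K` satisfies `|w| ≤ K |v|` and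
`|w x - w y| ≤ K |v x - v y|`. By Parseval, applied to `w` and to the increments
`w(· + h) - w`, this gives for every `h` the spectral inequality
`∑ 4 sin²(πnh) |ŵ(n)|² ≤ K² ∑ 4 sin²(πnh) |v̂(n)|²` (`tsum_shiftSymbol_energy_le`), together with
the `L²` bound `tsum_energy_le`. What remains is a statement on sequences
(`exists_weighted_bound`): superposing the symbols `4 sin²(πnh)` over `h` recovers a weight
comparable to `|n|^{2s}`.

* For `s < 1`, the dyadic superposition `∑_j 4^{js} · 4 sin²(πn2^{-j})` works. It replaces the
  Gagliardo double integral by geometric sums (`le_dyadicWeight`, `dyadicWeight_le`).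
* For `s = 1` that sum diverges, and one uses the difference quotient `M² · 4 sin²(πn/(2M))`
  instead: it is at most `π² n²` for all `n`, and by Jordan's inequality at least `n²` for
  `|n| ≤ M`. This bounds every finite partial sum uniformly in `M`.
-/

open MeasureTheory
open scoped ENNReal

noncomputable section

/-! ### Parseval and translation differences -/

/-- The energy `|f̂(n)|²` of the `n`-th Fourier mode of a real-valued function on the torus. -/
def energy (f : AddCircle (1 : ℝ) → ℝ) (n : ℤ) : ℝ≥0∞ :=
  (‖fourierCoeff (fun x => (f x : ℂ)) n‖₊ : ℝ≥0∞) ^ 2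

/-- The squared symbol `|e^{2πinh} - 1|² = 4 sin²(πnh)` of the difference operator
`f ↦ f(· + h) - f`. -/
def shiftSymbol (h : ℝ) (n : ℤ) : ℝ≥0∞ :=
  ENNReal.ofReal (4 * Real.sin (Real.pi * n * h) ^ 2)

/-- Parseval's identity. -/
lemma tsum_energy (f : AddCircle (1 : ℝ) → ℝ) (hf : Continuous f) :
    ∑' n, energy f n = ENNReal.ofReal (∫ x, (f x) ^ 2 ∂AddCircle.haarAddCircle) := by
  let g : C(AddCircle (1 : ℝ), ℂ) := ⟨fun x => (f x : ℂ), by fun_prop⟩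
  have H := hasSum_sq_fourierCoeff (ContinuousMap.toLp 2 AddCircle.haarAddCircle ℂ g)
  simp only [fourierCoeff_toLp] at H
  have hI : ∫ t, ‖(ContinuousMap.toLp 2 AddCircle.haarAddCircle ℂ g : AddCircle (1 : ℝ) → ℂ) t‖ ^ 2
      ∂AddCircle.haarAddCircle = ∫ x, (f x) ^ 2 ∂AddCircle.haarAddCircle := by
    apply integral_congr_ae
    filter_upwards [ContinuousMap.coeFn_toLp (p := 2) (𝕜 := ℂ) AddCircle.haarAddCircle g] with x hx
    rw [hx]
    simp [g]
  rw [hI] at H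
  rw [← H.tsum_eq, ENNReal.ofReal_tsum_of_nonneg (fun n => by positivity) H.summable]
  congr 1
  ext1 n
  rw [energy, ENNReal.ofReal_pow (norm_nonneg _), ofReal_norm, enorm_eq_nnnorm]
  rfl

lemma fourierCoeff_shift (f : AddCircle (1 : ℝ) → ℂ) (hf : Continuous f)
    (h : AddCircle (1 : ℝ)) (n : ℤ) :
    fourierCoeff (fun x => f (x + h) - f x) n = (fourier n h - 1) * fourierCoeff f n := by
  have hint : ∀ g : AddCircle (1 : ℝ) → ℂ, Continuous g →
      Integrable g AddCircle.haarAddCircle := fun g hg =>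
    hg.integrable_of_hasCompactSupport (HasCompactSupport.of_compactSpace g)
  have h1 : ∫ t, fourier (-n) t * f (t + h) ∂AddCircle.haarAddCircle
      = fourier n h * ∫ t, fourier (-n) t * f t ∂AddCircle.haarAddCircle := by
    rw [← integral_const_mul,
      ← MeasureTheory.integral_add_right_eq_self
        (fun t => fourier n h * (fourier (-n) t * f t)) h]
    congr 1
    ext1 t
    have e : (fourier (-n) (t + h) : ℂ) = fourier (-n) t * fourier (-n) h := by
      simp [fourier_apply, smul_add, AddCircle.toCircle_add]
    have e2 : (fourier n h : ℂ) * fourier (-n) h = 1 := by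
      rw [← fourier_add]; simp
    rw [e]
    linear_combination (-(fourier (-n) t * f (t + h))) * e2
  simp only [fourierCoeff, smul_eq_mul, mul_sub]
  rw [integral_sub (hint _ (by fun_prop)) (hint _ (by fun_prop)), h1]
  ring

lemma energy_shift (f : AddCircle (1 : ℝ) → ℝ) (hf : Continuous f) (h : ℝ) (n : ℤ) :
    energy (fun x => f (x + (h : AddCircle (1 : ℝ))) - f x) n = shiftSymbol h n * energy f n := by
  have hs : (‖(fourier n (h : AddCircle (1 : ℝ)) : ℂ) - 1‖₊ : ℝ≥0∞) ^ 2 = shiftSymbol h n := by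
    have : (fourier n (h : AddCircle (1 : ℝ)) : ℂ)
        = Complex.exp (Complex.I * ((2 * Real.pi * n * h : ℝ) : ℂ)) := by
      rw [fourier_coe_apply]
      congr 1
      push_cast
      ring
    rw [← enorm_eq_nnnorm, ← ofReal_norm, ← ENNReal.ofReal_pow (norm_nonneg _), this,
      Complex.norm_exp_I_mul_ofReal_sub_one, shiftSymbol, Real.norm_eq_abs, sq_abs,
      show 2 * Real.pi * n * h / 2 = Real.pi * n * h by ring]
    congr 1
    ring
  have := fourierCoeff_shift (fun x => (f x : ℂ)) (by fun_prop) h n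
  simp only [energy, Complex.ofReal_sub]
  rw [this, nnnorm_mul, ENNReal.coe_mul, mul_pow, hs]

lemma tsum_energy_le (K : ℝ) (v w : AddCircle (1 : ℝ) → ℝ) (hv : Continuous v)
    (hw : Continuous w) (h : ∀ x, |w x| ≤ K * |v x|) :
    ∑' n, energy w n ≤ ENNReal.ofReal (K ^ 2) * ∑' n, energy v n := by
  have hint : ∀ g : AddCircle (1 : ℝ) → ℝ, Continuous g →
      Integrable g AddCircle.haarAddCircle := fun g hg =>
    hg.integrable_of_hasCompactSupport (HasCompactSupport.of_compactSpace g)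
  rw [tsum_energy w hw, tsum_energy v hv, ← ENNReal.ofReal_mul (sq_nonneg K),
    ← integral_const_mul]
  apply ENNReal.ofReal_le_ofReal
  apply integral_mono (hint _ (by fun_prop)) (hint _ (by fun_prop))
  intro x
  have := pow_le_pow_left₀ (abs_nonneg _) (h x) 2
  rwa [mul_pow, sq_abs, sq_abs] at this

/-- A pointwise increment bound transfers to the spectral side, one translation at a time. -/
lemma tsum_shiftSymbol_energy_le (K : ℝ) (v w : AddCircle (1 : ℝ) → ℝ) (hv : Continuous v)
    (hw : Continuous w) (hinc : ∀ x y, |w x - w y| ≤ K * |v x - v y|) (h : ℝ) :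
    ∑' n, shiftSymbol h n * energy w n
      ≤ ENNReal.ofReal (K ^ 2) * ∑' n, shiftSymbol h n * energy v n := by
  simp only [← energy_shift w hw, ← energy_shift v hv]
  exact tsum_energy_le K _ _ (by fun_prop) (by fun_prop) (fun x => hinc _ _)

/-! ### Bounds for the symbol and the dyadic weight -/

lemma four_sin_sq_le (h : ℝ) (n : ℤ) :
    4 * Real.sin (Real.pi * n * h) ^ 2 ≤ 4 * Real.pi ^ 2 * ((n : ℝ) ^ 2 * h ^ 2) := by
  have := sq_le_sq.2 (Real.abs_sin_le_abs (x := Real.pi * n * h))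
  nlinarith

/-- Jordan's inequality, away from the aliasing zone `|n h| > 1/2`. -/
lemma le_four_sin_sq (h : ℝ) (n : ℤ) (hn : |(n : ℝ) * h| ≤ 1 / 2) :
    16 * ((n : ℝ) ^ 2 * h ^ 2) ≤ 4 * Real.sin (Real.pi * n * h) ^ 2 := by
  have hp := Real.pi_pos
  have h1 := Real.mul_le_sin (x := Real.pi * |(n : ℝ) * h|) (by positivity) (by nlinarith)
  have h2 : 2 / Real.pi * (Real.pi * |(n : ℝ) * h|) = 2 * |(n : ℝ) * h| := by field_simp
  rw [h2] at h1
  have h3 : Real.sin (Real.pi * |(n : ℝ) * h|) ^ 2 = Real.sin (Real.pi * n * h) ^ 2 := by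
    rcases abs_choice ((n : ℝ) * h) with e | e <;> rw [e]
    · ring_nf
    · rw [show Real.pi * -((n : ℝ) * h) = -(Real.pi * n * h) by ring, Real.sin_neg, neg_sq]
  have h4 := pow_le_pow_left₀ (by positivity) h1 2
  rw [h3, mul_pow, sq_abs] at h4
  nlinarith

lemma one_add_sq_rpow_le (s : ℝ) (hs0 : 0 < s) (hs₂ : s ≤ 1) (n : ℤ) (hn : n ≠ 0) :
    (1 + (n : ℝ) ^ 2) ^ s ≤ 2 * ((n : ℝ) ^ 2) ^ s := by
  have h1 : (1 : ℝ) ≤ (n : ℝ) ^ 2 := by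
    have : (1 : ℤ) ≤ n ^ 2 := by have := sq_pos_of_ne_zero hn; omega
    exact_mod_cast this
  calc (1 + (n : ℝ) ^ 2) ^ s ≤ (2 * (n : ℝ) ^ 2) ^ s :=
        Real.rpow_le_rpow (by positivity) (by linarith) hs0.le
    _ = 2 ^ s * ((n : ℝ) ^ 2) ^ s := Real.mul_rpow (by norm_num) (by positivity)
    _ ≤ 2 * ((n : ℝ) ^ 2) ^ s := by
        gcongr
        calc (2 : ℝ) ^ s ≤ 2 ^ (1 : ℝ) := Real.rpow_le_rpow_of_exponent_le (by norm_num) hs₂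
          _ = 2 := by simp

/-- The weight `Σ_j 4^{js} |e^{2πin2^{-j}} - 1|²`, a dyadic form of the Gagliardo seminorm. -/
def dyadicWeight (s : ℝ) (n : ℤ) : ℝ≥0∞ :=
  ∑' j : ℕ, ENNReal.ofReal (((4 : ℝ) ^ s) ^ j) * shiftSymbol ((1 / 2 : ℝ) ^ j) n

/-- For `n ≠ 0` the scale `2^j ∈ (2|n|, 4|n|]` alone already gives the lower bound. -/
lemma le_dyadicWeight (s : ℝ) (hs0 : 0 < s) (n : ℤ) (hn : n ≠ 0) :
    ENNReal.ofReal (((n : ℝ) ^ 2) ^ s) ≤ dyadicWeight s n := by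
  have hn' : n.natAbs ≠ 0 := by simpa using hn
  set J := Nat.log 2 n.natAbs with hJ
  have hu : (|(n : ℝ)|) < 2 ^ (J + 1) := by
    have := Nat.lt_pow_succ_log_self (b := 2) (by norm_num) n.natAbs
    rw [← Int.cast_abs, ← Int.natCast_natAbs]
    exact_mod_cast this
  have hl : (2 : ℝ) ^ J ≤ |(n : ℝ)| := by
    have := Nat.pow_log_le_self 2 hn'
    rw [← Int.cast_abs, ← Int.natCast_natAbs]
    exact_mod_cast this
  refine le_trans ?_ (ENNReal.le_tsum (J + 2))
  rw [shiftSymbol, ← ENNReal.ofReal_mul (by positivity)]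
  apply ENNReal.ofReal_le_ofReal
  have hpos : (0 : ℝ) < 2 ^ J := by positivity
  have h2 : (1 / 2 : ℝ) ^ (J + 2) = 1 / (4 * 2 ^ J) := by
    rw [one_div_pow, pow_add]; ring
  have hlow : 1 / 4 ≤ |(n : ℝ) * (1 / 2 : ℝ) ^ (J + 2)| := by
    rw [h2, abs_mul, abs_of_pos (by positivity : (0 : ℝ) < 1 / (4 * 2 ^ J)), mul_one_div,
      div_le_div_iff₀ (by norm_num) (by positivity)]
    linarith
  have hup : |(n : ℝ) * (1 / 2 : ℝ) ^ (J + 2)| ≤ 1 / 2 := by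
    rw [h2, abs_mul, abs_of_pos (by positivity : (0 : ℝ) < 1 / (4 * 2 ^ J)), mul_one_div,
      div_le_div_iff₀ (by positivity) (by norm_num)]
    rw [pow_succ] at hu
    linarith
  have hsin := le_four_sin_sq _ n hup
  have h3 : 1 ≤ 4 * Real.sin (Real.pi * n * (1 / 2 : ℝ) ^ (J + 2)) ^ 2 := by
    refine le_trans ?_ hsin
    rw [← mul_pow, ← sq_abs]
    nlinarith
  have h4 : ((n : ℝ) ^ 2) ^ s ≤ ((4 : ℝ) ^ s) ^ (J + 2) := by
    rw [← Real.rpow_natCast ((4 : ℝ) ^ s), ← Real.rpow_mul (by norm_num), mul_comm,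
      Real.rpow_mul (by norm_num), Real.rpow_natCast]
    apply Real.rpow_le_rpow (by positivity) _ hs0.le
    calc (n : ℝ) ^ 2 = |(n : ℝ)| ^ 2 := (sq_abs _).symm
      _ ≤ (2 ^ (J + 1)) ^ 2 := by gcongr
      _ = 4 ^ (J + 1) := by rw [← pow_mul, mul_comm, pow_mul]; norm_num
      _ ≤ 4 ^ (J + 2) := by gcongr <;> norm_num
  calc ((n : ℝ) ^ 2) ^ s ≤ ((4 : ℝ) ^ s) ^ (J + 2) * 1 := by rw [mul_one]; exact h4
    _ ≤ _ := by gcongr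

/-- Splitting at the scale `2^j ≈ |n|`, both pieces are dominated by geometric sums;
the high-frequency one converges because `4^{s-1} < 1`. -/
lemma dyadicWeight_le (s : ℝ) (hs0 : 0 < s) (hs1 : s < 1) :
    ∃ C : ℝ, 0 ≤ C ∧ ∀ n : ℤ,
      dyadicWeight s n ≤ ENNReal.ofReal C * ENNReal.ofReal ((1 + (n : ℝ) ^ 2) ^ s) := by
  set a : ℝ := (4 : ℝ) ^ s with ha
  have ha1 : 1 < a := Real.one_lt_rpow (by norm_num) hs0
  have ha4 : a < 4 := by
    calc a < 4 ^ (1 : ℝ) := Real.rpow_lt_rpow_of_exponent_lt (by norm_num) hs1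
      _ = 4 := by simp
  have hc1 : 0 < a - 1 := by linarith
  have hc2 : 0 < 1 - a / 4 := by linarith
  refine ⟨(4 / (a - 1) + 4 * Real.pi ^ 2 / (1 - a / 4)) * a, by positivity, fun n => ?_⟩
  rw [← ENNReal.ofReal_mul (by positivity)]
  -- `4^(N-1) ≤ 1 + n² < 4^N`
  obtain ⟨J, hJl, hJu⟩ : ∃ J : ℕ, (4 : ℝ) ^ J ≤ 1 + (n : ℝ) ^ 2 ∧ 1 + (n : ℝ) ^ 2 < 4 ^ (J + 1) := by
    have e : ((1 + n.natAbs ^ 2 : ℕ) : ℝ) = 1 + (n : ℝ) ^ 2 := by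
      push_cast
      rw [Nat.cast_natAbs, Int.cast_abs, sq_abs]
    refine ⟨Nat.log 4 (1 + n.natAbs ^ 2), ?_, ?_⟩
    · rw [← e]
      exact_mod_cast Nat.pow_log_le_self 4 (by positivity)
    · rw [← e]
      exact_mod_cast Nat.lt_pow_succ_log_self (by norm_num) _
  set N := J + 1 with hN
  have haN : a ^ N ≤ a * (1 + (n : ℝ) ^ 2) ^ s := by
    rw [hN, pow_succ, mul_comm]
    gcongr
    rw [ha, ← Real.rpow_natCast, ← Real.rpow_mul (by norm_num), mul_comm,
      Real.rpow_mul (by norm_num), Real.rpow_natCast]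
    exact Real.rpow_le_rpow (by positivity) hJl hs0.le
  let g : ℕ → ℝ := fun j => a ^ j * (4 * Real.sin (Real.pi * n * (1 / 2 : ℝ) ^ j) ^ 2)
  have hg0 : ∀ j, 0 ≤ g j := fun j => by positivity
  have hhead : ∑ j ∈ Finset.range N, g j ≤ 4 / (a - 1) * a ^ N := by
    calc ∑ j ∈ Finset.range N, g j ≤ ∑ j ∈ Finset.range N, a ^ j * 4 := by
          apply Finset.sum_le_sum
          intro j _
          simp only [g]
          gcongr
          nlinarith [Real.sin_sq_le_one (Real.pi * n * (1 / 2 : ℝ) ^ j)]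
      _ = (a ^ N - 1) / (a - 1) * 4 := by rw [← Finset.sum_mul, geom_sum_eq ha1.ne']
      _ ≤ a ^ N / (a - 1) * 4 := by gcongr; linarith
      _ = 4 / (a - 1) * a ^ N := by ring
  have htail : ∀ M : ℕ, ∑ i ∈ Finset.range M, g (N + i)
      ≤ 4 * Real.pi ^ 2 / (1 - a / 4) * a ^ N := by
    intro M
    calc ∑ i ∈ Finset.range M, g (N + i)
        ≤ ∑ i ∈ Finset.range M, 4 * Real.pi ^ 2 * a ^ N * (a / 4) ^ i := by
          apply Finset.sum_le_sum
          intro i _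
          have h4 : ((1 / 2 : ℝ) ^ (N + i)) ^ 2 = 1 / (4 ^ N * 4 ^ i) := by
            rw [← pow_mul, mul_comm, pow_mul, ← pow_add, ← one_div_pow]; norm_num
          have h5 : (n : ℝ) ^ 2 * ((1 / 2 : ℝ) ^ (N + i)) ^ 2 ≤ 1 / 4 ^ i := by
            rw [h4, mul_one_div, div_le_div_iff₀ (by positivity) (by positivity), one_mul]
            gcongr
            linarith
          calc g (N + i) ≤ a ^ (N + i) * (4 * Real.pi ^ 2 * (1 / 4 ^ i)) := by
                simp only [g]
                refine mul_le_mul_of_nonneg_left ?_ (by positivity)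
                exact (four_sin_sq_le _ n).trans (by gcongr)
            _ = 4 * Real.pi ^ 2 * a ^ N * (a / 4) ^ i := by
                rw [pow_add, div_pow]; ring
      _ = 4 * Real.pi ^ 2 * a ^ N * ∑ i ∈ Finset.range M, (a / 4) ^ i := by
          rw [Finset.mul_sum]
      _ ≤ 4 * Real.pi ^ 2 * a ^ N * (1 - a / 4)⁻¹ := by
          gcongr
          rw [← tsum_geometric_of_lt_one (by positivity) (by linarith)]
          exact (summable_geometric_of_lt_one (by positivity) (by linarith)).sum_le_tsum _
            (fun i _ => by positivity)
      _ = 4 * Real.pi ^ 2 / (1 - a / 4) * a ^ N := by ring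
  rw [dyadicWeight]
  refine ENNReal.tsum_le_of_sum_range_le fun M => ?_
  have e : ∀ j, ENNReal.ofReal (a ^ j) * shiftSymbol ((1 / 2 : ℝ) ^ j) n = ENNReal.ofReal (g j) :=
    fun j => by rw [shiftSymbol, ← ENNReal.ofReal_mul (by positivity)]
  simp only [← ha, e]
  rw [← ENNReal.ofReal_sum_of_nonneg (fun j _ => hg0 j)]
  apply ENNReal.ofReal_le_ofReal
  calc ∑ j ∈ Finset.range M, g j ≤ ∑ j ∈ Finset.range (N + M), g j :=
        Finset.sum_le_sum_of_subset_of_nonneg (Finset.range_mono (by omega)) (fun j _ _ => hg0 j)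
    _ = ∑ j ∈ Finset.range N, g j + ∑ i ∈ Finset.range M, g (N + i) := Finset.sum_range_add _ _ _
    _ ≤ (4 / (a - 1) + 4 * Real.pi ^ 2 / (1 - a / 4)) * a ^ N := by
        rw [add_mul]; exact add_le_add hhead (htail M)
    _ ≤ (4 / (a - 1) + 4 * Real.pi ^ 2 / (1 - a / 4)) * (a * (1 + (n : ℝ) ^ 2) ^ s) := by gcongr
    _ = _ := by ring

/-! ### From translation differences to the Sobolev norm -/

/-- If `W` satisfies `W ≲ ⟨n⟩^{2s}` everywhere and `⟨n⟩^{2s} ≲ 1 + W` on the modes in `t`,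
an `ℓ²` bound together with a `W`-weighted bound gives an `H^s` bound on the modes in `t`. -/
lemma sum_le_of_weight (ω A B W : ℤ → ℝ≥0∞) (L C : ℝ≥0∞) (t : Finset ℤ)
    (hω : ∀ n, 1 ≤ ω n)
    (hlow : ∀ n ∈ t, ω n ≤ 2 * (1 + W n)) (hup : ∀ n, W n ≤ C * ω n)
    (h0 : ∑' n, A n ≤ L * ∑' n, B n) (h1 : ∑' n, W n * A n ≤ L * ∑' n, W n * B n) :
    ∑ n ∈ t, ω n * A n ≤ 2 * (1 + C) * L * ∑' n, ω n * B n := by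
  calc ∑ n ∈ t, ω n * A n ≤ ∑ n ∈ t, 2 * (A n + W n * A n) := by
        apply Finset.sum_le_sum
        intro n hn
        calc ω n * A n ≤ 2 * (1 + W n) * A n := by gcongr; exact hlow n hn
          _ = _ := by ring
    _ ≤ ∑' n, 2 * (A n + W n * A n) := ENNReal.sum_le_tsum t
    _ = 2 * (∑' n, A n + ∑' n, W n * A n) := by rw [ENNReal.tsum_mul_left, ENNReal.tsum_add]
    _ ≤ 2 * (L * ∑' n, ω n * B n + L * ∑' n, C * (ω n * B n)) := by
        gcongr
        · refine h0.trans ?_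
          gcongr with n
          exact le_mul_of_one_le_left' (hω n)
        · refine h1.trans ?_
          refine mul_le_mul_right (ENNReal.tsum_le_tsum fun n => ?_) _
          rw [← mul_assoc]
          exact mul_le_mul_left (hup n) _
    _ = _ := by rw [ENNReal.tsum_mul_left]; ring

/-- The purely spectral core: control of all translation differences in `ℓ²` forces control of
the `H^s` energy. -/
lemma exists_weighted_bound (s : ℝ) (hs0 : 0 < s) (hs₂ : s ≤ 1) :
    ∃ C : ℝ, 0 ≤ C ∧ ∀ (A B : ℤ → ℝ≥0∞) (L : ℝ≥0∞),
      ∑' n, A n ≤ L * ∑' n, B n →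
      (∀ h : ℝ, ∑' n, shiftSymbol h n * A n ≤ L * ∑' n, shiftSymbol h n * B n) →
      ∑' n : ℤ, ENNReal.ofReal ((1 + (n : ℝ) ^ 2) ^ s) * A n
        ≤ 2 * (1 + ENNReal.ofReal C) * L *
          ∑' n : ℤ, ENNReal.ofReal ((1 + (n : ℝ) ^ 2) ^ s) * B n := by
  have hω : ∀ n : ℤ, 1 ≤ ENNReal.ofReal ((1 + (n : ℝ) ^ 2) ^ s) := fun n => by
    rw [ENNReal.one_le_ofReal]
    exact Real.one_le_rpow (by nlinarith [sq_nonneg (n : ℝ)]) hs0.le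
  -- It suffices to bound the weight from below at the nonzero modes.
  have hred : ∀ (W : ℤ → ℝ≥0∞) (n : ℤ),
      (n ≠ 0 → ENNReal.ofReal (((n : ℝ) ^ 2) ^ s) ≤ W n) →
      ENNReal.ofReal ((1 + (n : ℝ) ^ 2) ^ s) ≤ 2 * (1 + W n) := by
    intro W n hW
    rcases eq_or_ne n 0 with rfl | hn
    · simp only [Int.cast_zero, ne_eq, OfNat.ofNat_ne_zero, not_false_eq_true, zero_pow, add_zero,
        Real.one_rpow, ENNReal.ofReal_one]
      calc (1 : ℝ≥0∞) ≤ 2 * 1 := by norm_num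
        _ ≤ _ := by gcongr; exact le_self_add
    · calc ENNReal.ofReal ((1 + (n : ℝ) ^ 2) ^ s) ≤ ENNReal.ofReal (2 * ((n : ℝ) ^ 2) ^ s) :=
            ENNReal.ofReal_le_ofReal (one_add_sq_rpow_le s hs0 hs₂ n hn)
        _ = 2 * ENNReal.ofReal (((n : ℝ) ^ 2) ^ s) := by
            rw [ENNReal.ofReal_mul (by norm_num)]; simp
        _ ≤ 2 * (1 + W n) := by gcongr; exact (hW hn).trans le_add_self
  rcases hs₂.lt_or_eq with hs1 | rfl
  · obtain ⟨C, hC0, hC⟩ := dyadicWeight_le s hs0 hs1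
    refine ⟨C, hC0, fun A B L h0 h1 => ?_⟩
    rw [ENNReal.tsum_eq_iSup_sum]
    refine iSup_le fun t => ?_
    refine sum_le_of_weight (fun n : ℤ => ENNReal.ofReal ((1 + (n : ℝ) ^ 2) ^ s)) A B
      (dyadicWeight s) L _ t hω (fun n _ => hred _ n (le_dyadicWeight s hs0 n)) hC h0 ?_
    have key : ∀ D : ℤ → ℝ≥0∞, ∑' n, dyadicWeight s n * D n
        = ∑' j : ℕ, ENNReal.ofReal (((4 : ℝ) ^ s) ^ j) *
            ∑' n, shiftSymbol ((1 / 2 : ℝ) ^ j) n * D n := by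
      intro D
      simp only [dyadicWeight, ← ENNReal.tsum_mul_right, ← ENNReal.tsum_mul_left]
      rw [ENNReal.tsum_comm]
      simp only [mul_assoc]
    rw [key, key, ← ENNReal.tsum_mul_left]
    apply ENNReal.tsum_le_tsum
    intro j
    rw [mul_left_comm]
    gcongr
    exact h1 _
  · refine ⟨Real.pi ^ 2, by positivity, fun A B L h0 h1 => ?_⟩
    rw [ENNReal.tsum_eq_iSup_sum]
    refine iSup_le fun t => ?_
    -- A single translation, by `1/(2M)` with `M` beyond all modes of `t`, replaces `h → 0`.
    obtain ⟨M, hM0, hM⟩ : ∃ M : ℝ, 0 < M ∧ ∀ n ∈ t, |(n : ℝ)| ≤ M := by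
      refine ⟨∑ n ∈ t, |(n : ℝ)| + 1, by positivity, fun n hn => ?_⟩
      have := Finset.single_le_sum (f := fun n : ℤ => |(n : ℝ)|) (fun _ _ => abs_nonneg _) hn
      linarith
    refine sum_le_of_weight (fun n : ℤ => ENNReal.ofReal ((1 + (n : ℝ) ^ 2) ^ (1 : ℝ))) A B
      (fun n => ENNReal.ofReal (M ^ 2) * shiftSymbol (1 / (2 * M)) n) L _ t hω
      (fun n hn => hred
        (fun n => ENNReal.ofReal (M ^ 2) * shiftSymbol (1 / (2 * M)) n) n fun _ => ?_) (fun n => ?_) h0 ?_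
    · rw [shiftSymbol, ← ENNReal.ofReal_mul (by positivity)]
      apply ENNReal.ofReal_le_ofReal
      rw [Real.rpow_one]
      have hb : |(n : ℝ) * (1 / (2 * M))| ≤ 1 / 2 := by
        rw [abs_mul, abs_of_pos (by positivity : 0 < 1 / (2 * M)), mul_one_div,
          div_le_div_iff₀ (by positivity) (by norm_num)]
        linarith [hM n hn]
      calc (n : ℝ) ^ 2 ≤ 4 * (n : ℝ) ^ 2 := by nlinarith [sq_nonneg (n : ℝ)]
        _ = M ^ 2 * (16 * ((n : ℝ) ^ 2 * (1 / (2 * M)) ^ 2)) := by field_simp; norm_num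
        _ ≤ _ := mul_le_mul_of_nonneg_left (le_four_sin_sq _ n hb) (by positivity)
    · rw [shiftSymbol, ← ENNReal.ofReal_mul (by positivity), ← ENNReal.ofReal_mul (by positivity)]
      apply ENNReal.ofReal_le_ofReal
      rw [Real.rpow_one]
      calc _ ≤ M ^ 2 * (4 * Real.pi ^ 2 * ((n : ℝ) ^ 2 * (1 / (2 * M)) ^ 2)) :=
            mul_le_mul_of_nonneg_left (four_sin_sq_le _ n) (by positivity)
        _ = Real.pi ^ 2 * (n : ℝ) ^ 2 := by field_simp; ring
        _ ≤ _ := by gcongr; linarith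
    · simp only [mul_assoc]
      rw [ENNReal.tsum_mul_left, ENNReal.tsum_mul_left, mul_left_comm]
      gcongr
      exact h1 _

/-! ### Composition with a Lipschitz function -/

/-- for `s ∈ (1/2,1]` and `F` smooth with bounded derivative, there is
`C > 0` such that `‖F∘v − F(0)‖_{H^s} ≤ C ‖v‖_{H^s}` for every `v ∈ H^s(𝕋)`
(identified with its continuous representative). -/
theorem smooth_composition_Hs_lipschitz (s : ℝ) (hs₁ : 1 / 2 < s) (hs₂ : s ≤ 1)
    (F : ℝ → ℝ) (hF : ContDiff ℝ (⊤ : ℕ∞) F)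
    (K : ℝ) (hK : ∀ x : ℝ, |deriv F x| ≤ K) :
    ∃ C : ℝ, 0 < C ∧
      ∀ v : AddCircle (1 : ℝ) → ℝ, Continuous v → hsNorm s v ≠ ⊤ →
        hsNorm s (fun x => F (v x) - F 0) ≤ ENNReal.ofReal C * hsNorm s v := by
  obtain ⟨C, hC0, hC⟩ := exists_weighted_bound s (by linarith) hs₂
  have hLip : ∀ x y : ℝ, |F x - F y| ≤ K * |x - y| := fun x y =>
    convex_univ.norm_image_sub_le_of_norm_deriv_le
      (fun z _ => (hF.differentiable (by simp)).differentiableAt)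
      (fun z _ => hK z) (Set.mem_univ y) (Set.mem_univ x)
  have hFc : Continuous F := hF.continuous
  -- The added `1` only serves to make the constant positive.
  refine ⟨(2 * (1 + C) * K ^ 2 + 1) ^ (1 / 2 : ℝ), by positivity, fun v hv _ => ?_⟩
  have hw : Continuous fun x => F (v x) - F 0 := by fun_prop
  have main := hC (energy fun x => F (v x) - F 0) (energy v) (ENNReal.ofReal (K ^ 2))
    (tsum_energy_le K v _ hv hw fun x => by simpa using hLip (v x) 0)
    (tsum_shiftSymbol_energy_le K v _ hv hw fun x y => by simpa using hLip (v x) (v y))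
  have hconst : 2 * (1 + ENNReal.ofReal C) * ENNReal.ofReal (K ^ 2)
      ≤ ENNReal.ofReal (2 * (1 + C) * K ^ 2 + 1) := by
    have : 2 * (1 + ENNReal.ofReal C) * ENNReal.ofReal (K ^ 2)
        = ENNReal.ofReal (2 * (1 + C) * K ^ 2) := by
      rw [ENNReal.ofReal_mul (by positivity), ENNReal.ofReal_mul (by norm_num),
        ENNReal.ofReal_add (by norm_num) hC0]
      simp
    rw [this]
    exact ENNReal.ofReal_le_ofReal (by linarith)
  rw [← ENNReal.ofReal_rpow_of_nonneg (by positivity) (by norm_num), hsNorm, hsNorm,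
    ← ENNReal.mul_rpow_of_nonneg _ _ (by norm_num)]
  apply ENNReal.rpow_le_rpow _ (by norm_num)
  exact main.trans (mul_le_mul_left hconst _)
end
end

section
/- Let μ > 0, let c : ℝ → ℝ be continuously differentiable with c(u) > 0 for all u, and let γ, f : ℝ → ℝ. Let u : ℝ × ℝ → ℝ be twice continuously differentiable and satisfy, for all (t,x), μ u_tt − c(u) (c(u) u_x)_x + γ(u) u_t = f(u). Define R := √μ u_t − c(u) u_x and S := √μ u_t + c(u) u_x. Then the pointwise energy conservation law holds for all (t,x): √μ ∂_t (R² + S²) + ∂_x ( c(u) (R² − S²) ) + 4√μ γ(u) u_t² = 4√μ u_t f(u). -/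
/-!
With `w = c(u) u_x` one has `R² + S² = 2 (μ u_t² + w²)` and
`c(u) (R² - S²) = -4 √μ (c(u) u_t) w`. Differentiating by the product and chain rules, the
left-hand side becomes `4 √μ u_t (μ u_tt - c(u) w_x + γ(u) u_t)` plus a multiple of
`u_xt - u_tx`, which vanishes because the second derivative of a `C²` function is symmetric.
The equation then gives the claim.
-/

theorem hasDerivAt_slice_fst {E : Type*} [NormedAddCommGroup E] [NormedSpace ℝ E]
    {H : ℝ × ℝ → E} {H' : ℝ × ℝ →L[ℝ] E} {t x : ℝ} (h : HasFDerivAt H H' (t, x)) :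
    HasDerivAt (fun τ => H (τ, x)) (H' (1, 0)) t :=
  HasFDerivAt.comp_hasDerivAt (f := fun τ : ℝ => (τ, x)) t h
    ((hasDerivAt_id t).prodMk (hasDerivAt_const t x))

theorem hasDerivAt_slice_snd {E : Type*} [NormedAddCommGroup E] [NormedSpace ℝ E]
    {H : ℝ × ℝ → E} {H' : ℝ × ℝ →L[ℝ] E} {t x : ℝ} (h : HasFDerivAt H H' (t, x)) :
    HasDerivAt (fun y => H (t, y)) (H' (0, 1)) x :=
  HasFDerivAt.comp_hasDerivAt (f := fun y : ℝ => (t, y)) x h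
    ((hasDerivAt_const x t).prodMk (hasDerivAt_id x))

/-- Partial derivatives up to order two of a `C²` function of two variables, with equality of
the mixed derivatives: `b` serves both as the `x`-derivative of `u_t` and as the
`t`-derivative of `u_x`. -/
theorem exists_second_partials
    (u : ℝ → ℝ → ℝ) (hu : ContDiff ℝ 2 (fun p : ℝ × ℝ => u p.1 p.2))
    (ut ux : ℝ → ℝ → ℝ)
    (hut : ∀ t x, ut t x = deriv (fun τ => u τ x) t)
    (hux : ∀ t x, ux t x = deriv (fun y => u t y) x) (t x : ℝ) :
    HasDerivAt (fun τ => u τ x) (ut t x) t ∧ HasDerivAt (fun y => u t y) (ux t x) x ∧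
    ∃ a b d : ℝ, HasDerivAt (fun τ => ut τ x) a t ∧ HasDerivAt (fun y => ut t y) b x ∧
      HasDerivAt (fun τ => ux τ x) b t ∧ HasDerivAt (fun y => ux t y) d x := by
  obtain ⟨F, hF⟩ : ∃ F : ℝ × ℝ → ℝ, F = fun p => u p.1 p.2 := ⟨_, rfl⟩
  rw [← hF] at hu
  have huF : ∀ t x, u t x = F (t, x) := fun t x => by rw [hF]
  have hd : ∀ p, HasFDerivAt F (fderiv ℝ F p) p := fun p =>
    (hu.differentiable (by norm_num) p).hasFDerivAt
  have h1 : ∀ t x, HasDerivAt (fun τ => u τ x) (fderiv ℝ F (t, x) (1, 0)) t := fun t x => by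
    simp only [huF]
    exact hasDerivAt_slice_fst (hd (t, x))
  have h2 : ∀ t x, HasDerivAt (fun y => u t y) (fderiv ℝ F (t, x) (0, 1)) x := fun t x => by
    simp only [huF]
    exact hasDerivAt_slice_snd (hd (t, x))
  have eut : ∀ t x, ut t x = fderiv ℝ F (t, x) (1, 0) := fun t x => by
    rw [hut, (h1 t x).deriv]
  have eux : ∀ t x, ux t x = fderiv ℝ F (t, x) (0, 1) := fun t x => by
    rw [hux, (h2 t x).deriv]
  have hG : ContDiff ℝ 1 (fderiv ℝ F) := hu.fderiv_right (by norm_num)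
  have hG' : HasFDerivAt (fderiv ℝ F) (fderiv ℝ (fderiv ℝ F) (t, x)) (t, x) :=
    (hG.differentiable (by norm_num) (t, x)).hasFDerivAt
  have sym := second_derivative_symmetric hd hG' (1, 0) (0, 1)
  have gt (v : ℝ × ℝ) : HasDerivAt (fun τ => fderiv ℝ F (τ, x) v)
      (fderiv ℝ (fderiv ℝ F) (t, x) (1, 0) v) t := by
    simpa using (hasDerivAt_slice_fst hG').clm_apply (hasDerivAt_const t v)
  have gx (v : ℝ × ℝ) : HasDerivAt (fun y => fderiv ℝ F (t, y) v)
      (fderiv ℝ (fderiv ℝ F) (t, x) (0, 1) v) x := by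
    simpa using (hasDerivAt_slice_snd hG').clm_apply (hasDerivAt_const x v)
  have gtx := gt (0, 1)
  rw [sym] at gtx
  refine ⟨?_, ?_, fderiv ℝ (fderiv ℝ F) (t, x) (1, 0) (1, 0),
    fderiv ℝ (fderiv ℝ F) (t, x) (0, 1) (1, 0),
    fderiv ℝ (fderiv ℝ F) (t, x) (0, 1) (0, 1), ?_, ?_, ?_, ?_⟩
  · rw [eut]; exact h1 t x
  · rw [eux]; exact h2 t x
  · simpa only [eut] using gt (1, 0)
  · simpa only [eut] using gx (1, 0)
  · simpa only [eux] using gtx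
  · simpa only [eux] using gx (0, 1)

/-- pointwise energy conservation law for the damped variational wave
equation, in terms of the Riemann invariants `R` and `S`. -/
theorem pointwise_energy_conservation (μ : ℝ) (hμ : 0 < μ)
    (c γ f : ℝ → ℝ) (hc : ContDiff ℝ 1 c) (hcpos : ∀ u : ℝ, 0 < c u)
    (u : ℝ → ℝ → ℝ) (hu : ContDiff ℝ 2 (fun p : ℝ × ℝ => u p.1 p.2))
    (ut ux : ℝ → ℝ → ℝ)
    (hut : ∀ t x, ut t x = deriv (fun τ => u τ x) t)
    (hux : ∀ t x, ux t x = deriv (fun y => u t y) x)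
    (hpde : ∀ t x, μ * deriv (fun τ => ut τ x) t
        - c (u t x) * deriv (fun y => c (u t y) * ux t y) x
        + γ (u t x) * ut t x = f (u t x))
    (R S : ℝ → ℝ → ℝ)
    (hR : ∀ t x, R t x = Real.sqrt μ * ut t x - c (u t x) * ux t x)
    (hS : ∀ t x, S t x = Real.sqrt μ * ut t x + c (u t x) * ux t x) :
    ∀ t x : ℝ,
      Real.sqrt μ * deriv (fun τ => (R τ x) ^ 2 + (S τ x) ^ 2) t
        + deriv (fun y => c (u t y) * ((R t y) ^ 2 - (S t y) ^ 2)) x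
        + 4 * Real.sqrt μ * γ (u t x) * (ut t x) ^ 2
      = 4 * Real.sqrt μ * ut t x * f (u t x) := by
  intro t x
  obtain ⟨h1, h2, a, b, d, htt, htx, hxt, hxx⟩ :=
    exists_second_partials u hu ut ux hut hux t x
  have hc' : HasDerivAt c (deriv c (u t x)) (u t x) :=
    (hc.differentiable (by norm_num) _).hasDerivAt
  have ct : HasDerivAt (fun τ => c (u τ x)) (deriv c (u t x) * ut t x) t := hc'.comp t h1
  have cx : HasDerivAt (fun y => c (u t y)) (deriv c (u t x) * ux t x) x := hc'.comp x h2
  have wt := ct.fun_mul hxt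
  have wx := cx.fun_mul hxx
  have e1 := (((htt.const_mul (√μ)).fun_sub wt).fun_pow 2).fun_add
    (((htt.const_mul (√μ)).fun_add wt).fun_pow 2)
  have e2 := cx.fun_mul ((((htx.const_mul (√μ)).fun_sub wx).fun_pow 2).fun_sub
    (((htx.const_mul (√μ)).fun_add wx).fun_pow 2))
  have p := hpde t x
  rw [htt.deriv, wx.deriv] at p
  simp only [hR, hS]
  rw [e1.deriv, e2.deriv, ← p]
  have hs : √μ ^ 2 = μ := Real.sq_sqrt hμ.le
  -- Writing `μ = (√μ)²` turns the claim into a polynomial identity.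
  generalize √μ = s at *
  subst hs
  push_cast
  ring
end

section
/- Let μ > 0, let c : ℝ → ℝ be continuously differentiable with c(u) > 0 for all u, let γ, f : ℝ → ℝ be continuous, and let h : ℝ → ℝ be continuously differentiable. Define H(u) := ∫₀ᵘ h(v) γ(v) dv. Let u : ℝ × ℝ → ℝ be twice continuously differentiable, 1-periodic in the x-variable, and satisfy μ u_tt − c(u) (c(u) u_x)_x + γ(u) u_t = f(u) for all (t,x). Then for every t ∈ ℝ: (d/dt) ∫₀¹ ( μ u_t(t,x) h(u(t,x)) + H(u(t,x)) ) dx + ∫₀¹ (h·c)'(u(t,x)) c(u(t,x)) u_x(t,x)² dx = ∫₀¹ ( μ h'(u(t,x)) u_t(t,x)² + h(u(t,x)) f(u(t,x)) ) dx. -/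
/-!
The identity is obtained by multiplying the equation by `h(u)` and integrating over one period.
Since `U = (t, x) ↦ u t x` is `C²`, its partial derivatives are `C¹` and the integrand
`μ u_t h(u) + H(u)` has the jointly continuous `t`-derivative
`μ u_tt h(u) + μ h'(u) u_t² + h(u) γ(u) u_t`, so one may differentiate under the integral sign
(`hasDerivAt_integral_of_continuous_deriv`). By the equation this derivative equals
`μ h'(u) u_t² + h(u) f(u) + h(u) c(u) (c(u) u_x)_x`. In the last term
`h(u) c(u) (c(u) u_x)_x = (h(u) c(u) · c(u) u_x)_x - (h c)'(u) c(u) u_x²`, and the total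
`x`-derivative integrates to zero by periodicity.
-/

/-- Differentiation under the integral sign when the `t`-derivative is jointly continuous: on the
compact set `[t - 1, t + 1] × [a, b]` this derivative is bounded, which gives the domination. -/
lemma hasDerivAt_integral_of_continuous_deriv {F F' : ℝ → ℝ → ℝ} (a b : ℝ)
    (hF : Continuous fun p : ℝ × ℝ => F p.1 p.2)
    (hF' : Continuous fun p : ℝ × ℝ => F' p.1 p.2)
    (hd : ∀ t x, HasDerivAt (fun τ => F τ x) (F' t x) t) (t : ℝ) :
    HasDerivAt (fun τ => ∫ x in a..b, F τ x) (∫ x in a..b, F' t x) t := by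
  have hFt : ∀ τ, Continuous (F τ) := fun τ => hF.comp (by fun_prop : Continuous fun x => (τ, x))
  have hFt' : ∀ τ, Continuous (F' τ) :=
    fun τ => hF'.comp (by fun_prop : Continuous fun x => (τ, x))
  obtain ⟨C, hC⟩ := ((isCompact_closedBall t 1).prod
    (isCompact_uIcc (a := a) (b := b))).exists_bound_of_continuousOn hF'.continuousOn
  refine (intervalIntegral.hasDerivAt_integral_of_dominated_loc_of_deriv_le
    (F := F) (F' := F') (bound := fun _ => C) (Metric.closedBall_mem_nhds t one_pos)
    (Filter.Eventually.of_forall fun τ => (hFt τ).aestronglyMeasurable)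
    ((hFt t).intervalIntegrable _ _) (hFt' t).aestronglyMeasurable ?_
    intervalIntegrable_const ?_).2
  · exact Filter.Eventually.of_forall fun x hx τ hτ =>
      hC (τ, x) ⟨hτ, Set.uIoc_subset_uIcc hx⟩
  · exact Filter.Eventually.of_forall fun x _ τ _ => hd τ x

lemma hasDerivAt_fst_of_contDiff {V : ℝ → ℝ → ℝ}
    (hV : ContDiff ℝ 1 fun p : ℝ × ℝ => V p.1 p.2) (t x : ℝ) :
    HasDerivAt (fun τ => V τ x) (fderiv ℝ (fun p : ℝ × ℝ => V p.1 p.2) (t, x) (1, 0)) t :=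
  ((hV.differentiable one_ne_zero) (t, x)).hasFDerivAt.comp_hasDerivAt
    (f := fun τ : ℝ => (τ, x)) t
    ((hasDerivAt_id t).prodMk (hasDerivAt_const t x))

lemma hasDerivAt_snd_of_contDiff {V : ℝ → ℝ → ℝ}
    (hV : ContDiff ℝ 1 fun p : ℝ × ℝ => V p.1 p.2) (t x : ℝ) :
    HasDerivAt (fun y => V t y) (fderiv ℝ (fun p : ℝ × ℝ => V p.1 p.2) (t, x) (0, 1)) x :=
  ((hV.differentiable one_ne_zero) (t, x)).hasFDerivAt.comp_hasDerivAt
    (f := fun y : ℝ => (t, y)) x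
    ((hasDerivAt_const x t).prodMk (hasDerivAt_id x))


/-- parabolic energy balance for the damped variational wave equation:
with `H(u) = ∫₀ᵘ h(v)γ(v) dv`, the time derivative of
`∫₀¹ (μ u_t h(u) + H(u)) dx` plus `∫₀¹ (hc)'(u) c(u) u_x² dx`
equals `∫₀¹ (μ h'(u) u_t² + h(u) f(u)) dx`. -/
theorem parabolic_energy_balance (μ : ℝ) (hμ : 0 < μ)
    (c γ f : ℝ → ℝ) (hc : ContDiff ℝ 1 c) (hcpos : ∀ u : ℝ, 0 < c u)
    (hγ : Continuous γ) (hf : Continuous f)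
    (h : ℝ → ℝ) (hh : ContDiff ℝ 1 h)
    (H : ℝ → ℝ) (hH : ∀ z : ℝ, H z = ∫ v in (0 : ℝ)..z, h v * γ v)
    (u : ℝ → ℝ → ℝ) (hu : ContDiff ℝ 2 (fun p : ℝ × ℝ => u p.1 p.2))
    (hper : ∀ t x, u t (x + 1) = u t x)
    (ut ux : ℝ → ℝ → ℝ)
    (hut : ∀ t x, ut t x = deriv (fun τ => u τ x) t)
    (hux : ∀ t x, ux t x = deriv (fun y => u t y) x)
    (hpde : ∀ t x, μ * deriv (fun τ => ut τ x) t
        - c (u t x) * deriv (fun y => c (u t y) * ux t y) x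
        + γ (u t x) * ut t x = f (u t x)) :
    ∀ t : ℝ,
      HasDerivAt
        (fun τ => ∫ x in (0 : ℝ)..1, (μ * ut τ x * h (u τ x) + H (u τ x)))
        ((∫ x in (0 : ℝ)..1, (μ * deriv h (u t x) * (ut t x) ^ 2 + h (u t x) * f (u t x)))
          - ∫ x in (0 : ℝ)..1,
              deriv (fun v => h v * c v) (u t x) * c (u t x) * (ux t x) ^ 2) t := by
  have hu1 : ContDiff ℝ 1 (fun p : ℝ × ℝ => u p.1 p.2) := hu.of_le (by norm_num)
  have hD : ContDiff ℝ 1 (fderiv ℝ (fun p : ℝ × ℝ => u p.1 p.2)) :=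
    hu.fderiv_right (by norm_num)
  have hutD : ∀ t x, HasDerivAt (fun τ => u τ x) (ut t x) t := fun t x => by
    rw [hut]; exact (hasDerivAt_fst_of_contDiff hu1 t x).differentiableAt.hasDerivAt
  have huxD : ∀ t x, HasDerivAt (fun y => u t y) (ux t x) x := fun t x => by
    rw [hux]; exact (hasDerivAt_snd_of_contDiff hu1 t x).differentiableAt.hasDerivAt
  have hutC : ContDiff ℝ 1 (fun p : ℝ × ℝ => ut p.1 p.2) := by
    have e : (fun p : ℝ × ℝ => ut p.1 p.2)
        = fun p => fderiv ℝ (fun p : ℝ × ℝ => u p.1 p.2) p (1, 0) := by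
      funext p
      exact (hutD p.1 p.2).unique (hasDerivAt_fst_of_contDiff hu1 p.1 p.2)
    rw [e]; exact hD.clm_apply contDiff_const
  have huxC : ContDiff ℝ 1 (fun p : ℝ × ℝ => ux p.1 p.2) := by
    have e : (fun p : ℝ × ℝ => ux p.1 p.2)
        = fun p => fderiv ℝ (fun p : ℝ × ℝ => u p.1 p.2) p (0, 1) := by
      funext p
      exact (huxD p.1 p.2).unique (hasDerivAt_snd_of_contDiff hu1 p.1 p.2)
    rw [e]; exact hD.clm_apply contDiff_const
  -- `utt` is `u_tt`, and `W` is `(c(u) u_x)_x`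
  obtain ⟨utt, huttE⟩ : ∃ w : ℝ → ℝ → ℝ, ∀ t x, w t x = deriv (fun τ => ut τ x) t :=
    ⟨_, fun _ _ => rfl⟩
  obtain ⟨W, hWE⟩ : ∃ w : ℝ → ℝ → ℝ, ∀ t x, w t x = deriv (fun y => c (u t y) * ux t y) x :=
    ⟨_, fun _ _ => rfl⟩
  have huttD : ∀ t x, HasDerivAt (fun τ => ut τ x) (utt t x) t := fun t x => by
    rw [huttE]; exact (hasDerivAt_fst_of_contDiff hutC t x).differentiableAt.hasDerivAt
  have hcuxC : ContDiff ℝ 1 (fun p : ℝ × ℝ => c (u p.1 p.2) * ux p.1 p.2) :=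
    (hc.comp hu1).mul huxC
  have hWD : ∀ t x, HasDerivAt (fun y => c (u t y) * ux t y) (W t x) x := fun t x => by
    rw [hWE]
    exact (hasDerivAt_snd_of_contDiff (V := fun t y => c (u t y) * ux t y)
      hcuxC t x).differentiableAt.hasDerivAt
  have huttC : Continuous (fun p : ℝ × ℝ => utt p.1 p.2) := by
    have e : (fun p : ℝ × ℝ => utt p.1 p.2)
        = fun p => fderiv ℝ (fun p : ℝ × ℝ => ut p.1 p.2) p (1, 0) := by
      funext p
      exact (huttD p.1 p.2).unique (hasDerivAt_fst_of_contDiff hutC p.1 p.2)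
    rw [e]; exact (hutC.continuous_fderiv one_ne_zero).clm_apply continuous_const
  have hWC : Continuous (fun p : ℝ × ℝ => W p.1 p.2) := by
    have e : (fun p : ℝ × ℝ => W p.1 p.2)
        = fun p => fderiv ℝ (fun p : ℝ × ℝ => c (u p.1 p.2) * ux p.1 p.2) p (0, 1) := by
      funext p
      exact (hWD p.1 p.2).unique (hasDerivAt_snd_of_contDiff
        (V := fun t y => c (u t y) * ux t y) hcuxC p.1 p.2)
    rw [e]; exact (hcuxC.continuous_fderiv one_ne_zero).clm_apply continuous_const
  have hu0 := hu.continuous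
  have hut0 := hutC.continuous
  have hux0 := huxC.continuous
  have hh0 := hh.continuous
  have hc0 := hc.continuous
  have hh' : Continuous (deriv h) := hh.continuous_deriv le_rfl
  have hhc : ContDiff ℝ 1 (fun v => h v * c v) := hh.mul hc
  have hhc' : Continuous (deriv fun v => h v * c v) := hhc.continuous_deriv le_rfl
  have hhD : ∀ v, HasDerivAt h (deriv h v) v :=
    fun v => (hh.differentiable one_ne_zero v).hasDerivAt
  have hhcD : ∀ v, HasDerivAt (fun v => h v * c v) (deriv (fun v => h v * c v) v) v :=
    fun v => (hhc.differentiable one_ne_zero v).hasDerivAt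
  have hHD : ∀ v, HasDerivAt H (h v * γ v) v := fun v => by
    rw [funext hH]
    exact (hh0.mul hγ).integral_hasStrictDerivAt 0 v |>.hasDerivAt
  have hH0 : Continuous H := continuous_iff_continuousAt.2 fun v => (hHD v).continuousAt
  intro t
  have key := hasDerivAt_integral_of_continuous_deriv
    (F := fun t x => μ * ut t x * h (u t x) + H (u t x))
    (F' := fun t x => μ * utt t x * h (u t x) + μ * ut t x * (deriv h (u t x) * ut t x)
      + h (u t x) * γ (u t x) * ut t x) 0 1 (by fun_prop) (by fun_prop)
    (fun t x => (((huttD t x).const_mul μ).mul ((hhD _).comp t (hutD t x))).add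
      ((hHD _).comp t (hutD t x))) t
  have hs : Continuous fun x : ℝ => (t, x) := by fun_prop
  have hut1 : Continuous (ut t) := hut0.comp hs
  have hu1' : Continuous (u t) := hu0.comp hs
  have hux1 : Continuous (ux t) := hux0.comp hs
  have hW1 : Continuous (W t) := hWC.comp hs
  have hperx : ux t 1 = ux t 0 := by
    have h1 := deriv_comp_add_const (u t) 1 0
    rw [funext (hper t), zero_add] at h1
    rw [hux, hux]; exact h1.symm
  have hper0 : u t 1 = u t 0 := by simpa using hper t 0
  -- the flux `h(u) c(u) · c(u) u_x` is periodic, so its `x`-derivative has zero integral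
  have hflux := intervalIntegral.integral_eq_sub_of_hasDerivAt (a := 0) (b := 1)
    (f := fun x => (h (u t x) * c (u t x)) * (c (u t x) * ux t x))
    (f' := fun x => deriv (fun v => h v * c v) (u t x) * ux t x * (c (u t x) * ux t x)
      + (h (u t x) * c (u t x)) * W t x)
    (fun x _ => ((hhcD (u t x)).comp x (huxD t x)).mul (hWD t x))
    (Continuous.intervalIntegrable (by fun_prop) _ _)
  rw [hper0, hperx, sub_self] at hflux
  convert key using 1
  rw [← intervalIntegral.integral_sub (Continuous.intervalIntegrable (by fun_prop) _ _)
    (Continuous.intervalIntegrable (by fun_prop) _ _)]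
  refine (add_zero _).symm.trans ((congrArg _ hflux.symm).trans ?_)
  rw [← intervalIntegral.integral_add (Continuous.intervalIntegrable (by fun_prop) _ _)
    (Continuous.intervalIntegrable (by fun_prop) _ _)]
  refine intervalIntegral.integral_congr fun x _ => ?_
  have hp := hpde t x
  rw [← huttE, ← hWE] at hp
  linear_combination (-h (u t x)) * hp
end
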